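/- For all α_1, α_2 > 0 and all H ∈ (0,2), ∫_0^∞ ∫_0^∞ e^{−α_1 x − α_2 y} |x − y|^H dx dy = (Γ(H+1)/(α_1+α_2)) · (α_1^{−(H+1)} + α_2^{−(H+1)}), where Γ denotes the Gamma function. Equivalently, ∫_{−∞}^0 ∫_{−∞}^0 e^{α_1 u + α_2 v} |v − u|^H du dv equals the same value. -/

import Mathlib

open MeasureTheory

/-!
The plane is split along the diagonal. With `g β z = z ^ H * exp (-β z)` for `z > 0` and
`g β z = 0` otherwise, the integrand is
`exp (-(α₁ + α₂) x) * g α₂ (y - x) + exp (-(α₁ + α₂) y) * g α₁ (x - y)`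
(on the diagonal all terms vanish because `H ≠ 0`). By translation invariance the first summand
integrates, in `y` and then in `x`, to `(α₁ + α₂)⁻¹ * ∫ g α₂`, where `∫ g α₂` is the Gamma integral
`Γ(H + 1) * α₂ ^ (-(H + 1))`. The second summand is the first one with the roles of the variables
exchanged; Fubini's theorem applies since the summands are integrable on the quadrant
(`integrable_half`). The integral over the negative quadrant follows by reflecting both variables.
-/

/-- The Gamma density kernel `z ^ H * exp (-β z)` on `z > 0`, extended by zero to the real line. -/
noncomputable def gammaKernel (H β : ℝ) : ℝ → ℝ :=
  (Set.Ioi (0 : ℝ)).indicator fun z => z ^ H * Real.exp (-(β * z))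

lemma gammaKernel_nonneg (H β z : ℝ) : 0 ≤ gammaKernel H β z := by
  refine Set.indicator_nonneg (fun z hz => ?_) z
  have : (0 : ℝ) < z := hz
  positivity

lemma measurable_gammaKernel (H β : ℝ) : Measurable (gammaKernel H β) :=
  Measurable.indicator (by fun_prop) measurableSet_Ioi

lemma integrable_gammaKernel {H β : ℝ} (hH : 0 < H) (hβ : 0 < β) :
    Integrable (gammaKernel H β) := by
  refine (integrable_indicator_iff measurableSet_Ioi).2 ?_
  have := integrableOn_rpow_mul_exp_neg_mul_rpow (p := 1) (s := H) (by linarith) one_pos hβ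
  simpa using this

lemma integral_gammaKernel {H β : ℝ} (hH : 0 < H) (hβ : 0 < β) :
    ∫ z, gammaKernel H β z = Real.Gamma (H + 1) * β ^ (-(H + 1)) := by
  have h := Real.integral_rpow_mul_exp_neg_mul_Ioi (a := H + 1) (by linarith) hβ
  rw [add_sub_cancel_right] at h
  rw [gammaKernel, integral_indicator measurableSet_Ioi, h, one_div, Real.inv_rpow hβ.le,
    ← Real.rpow_neg hβ.le, mul_comm]

/-- For `x > 0` the translate by `x` of the kernel is supported in `y > 0`, so restricting to the
half-line loses nothing. -/
lemma setIntegral_gammaKernel_sub {H β x : ℝ} (hx : 0 < x) :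
    ∫ y in Set.Ioi (0 : ℝ), gammaKernel H β (y - x) = ∫ z, gammaKernel H β z := by
  rw [setIntegral_eq_integral_of_forall_compl_eq_zero,
    integral_sub_right_eq_self (gammaKernel H β) x]
  intro y hy
  refine Set.indicator_of_notMem ?_ _
  simp only [Set.mem_Ioi, not_lt] at hy ⊢
  linarith

lemma integrable_half {H s β : ℝ} (hH : 0 < H) (hs : 0 < s) (hβ : 0 < β) :
    Integrable (fun p : ℝ × ℝ => Real.exp (-s * p.1) * gammaKernel H β (p.2 - p.1))
      ((volume.restrict (Set.Ioi 0)).prod (volume.restrict (Set.Ioi 0))) := by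
  have hm : Measurable (fun p : ℝ × ℝ => Real.exp (-s * p.1) * gammaKernel H β (p.2 - p.1)) :=
    Measurable.mul (by fun_prop) ((measurable_gammaKernel H β).comp (by fun_prop))
  refine (integrable_prod_iff hm.aestronglyMeasurable).2 ⟨?_, ?_⟩
  · exact .of_forall fun x =>
      (((integrable_gammaKernel hH hβ).comp_sub_right x).const_mul (Real.exp (-s * x))).restrict
  · have h : IntegrableOn (fun x => Real.exp (-s * x) * ∫ z, gammaKernel H β z) (Set.Ioi 0) :=
      (exp_neg_integrableOn_Ioi 0 hs).mul_const _
    refine h.congr_fun (fun x hx => ?_) measurableSet_Ioi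
    simp only [norm_mul, Real.norm_of_nonneg (gammaKernel_nonneg _ _ _), Real.norm_eq_abs,
      Real.abs_exp]
    rw [integral_const_mul, setIntegral_gammaKernel_sub hx]

lemma integral_half {H s β : ℝ} (hH : 0 < H) (hs : 0 < s) (hβ : 0 < β) :
    ∫ x in Set.Ioi (0 : ℝ), ∫ y in Set.Ioi (0 : ℝ), Real.exp (-s * x) * gammaKernel H β (y - x)
      = Real.Gamma (H + 1) / s * β ^ (-(H + 1)) := by
  have h : ∀ x ∈ Set.Ioi (0 : ℝ),
      ∫ y in Set.Ioi (0 : ℝ), Real.exp (-s * x) * gammaKernel H β (y - x)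
        = Real.exp (-s * x) * (Real.Gamma (H + 1) * β ^ (-(H + 1))) := fun x hx => by
    rw [integral_const_mul, setIntegral_gammaKernel_sub hx, integral_gammaKernel hH hβ]
  rw [setIntegral_congr_fun measurableSet_Ioi h, integral_mul_const,
    integral_exp_mul_Ioi (neg_lt_zero.2 hs)]
  simp
  ring

lemma exp_mul_abs_rpow_eq {H : ℝ} (hH : 0 < H) (α₁ α₂ x y : ℝ) :
    Real.exp (-α₁ * x - α₂ * y) * |x - y| ^ H
      = Real.exp (-(α₁ + α₂) * x) * gammaKernel H α₂ (y - x)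
        + Real.exp (-(α₁ + α₂) * y) * gammaKernel H α₁ (x - y) := by
  rcases lt_trichotomy x y with h | rfl | h
  · have h1 : 0 < y - x := sub_pos.2 h
    have h2 : ¬ 0 < x - y := by linarith
    simp only [gammaKernel, Set.indicator_apply, Set.mem_Ioi, h1, h2, if_true, if_false]
    rw [abs_sub_comm, abs_of_pos h1, mul_left_comm, ← Real.exp_add, mul_zero, add_zero, mul_comm]
    ring_nf
  · simp [gammaKernel, Real.zero_rpow hH.ne']
  · have h1 : 0 < x - y := sub_pos.2 h
    have h2 : ¬ 0 < y - x := by linarith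
    simp only [gammaKernel, Set.indicator_apply, Set.mem_Ioi, h1, h2, if_true, if_false]
    rw [abs_of_pos h1, mul_left_comm, ← Real.exp_add, mul_zero, zero_add, mul_comm]
    ring_nf

lemma integral_positive_quadrant {α₁ α₂ H : ℝ} (h₁ : 0 < α₁) (h₂ : 0 < α₂) (hH : 0 < H) :
    (∫ x in Set.Ioi (0 : ℝ), ∫ y in Set.Ioi (0 : ℝ),
        Real.exp (-α₁ * x - α₂ * y) * |x - y| ^ H)
      = Real.Gamma (H + 1) / (α₁ + α₂) * (α₁ ^ (-(H + 1)) + α₂ ^ (-(H + 1))) := by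
  have hs : 0 < α₁ + α₂ := by linarith
  simp_rw [exp_mul_abs_rpow_eq hH]
  have i1 := integrable_half hH hs h₂
  have i2 := (integrable_half hH hs h₁).swap
  refine (integral_integral_add i1 i2).trans ?_
  have e2 := (integral_integral_swap
    (f := fun x y => Real.exp (-(α₁ + α₂) * y) * gammaKernel H α₁ (x - y)) i2).trans
    (integral_half hH hs h₁)
  refine (congrArg₂ (· + ·) (integral_half hH hs h₂) e2).trans ?_
  ring

lemma integral_Iio_eq_integral_Ioi_neg (f : ℝ → ℝ) :
    ∫ u in Set.Iio (0 : ℝ), f u = ∫ x in Set.Ioi (0 : ℝ), f (-x) := by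
  rw [integral_comp_neg_Ioi, neg_zero, integral_Iic_eq_integral_Iio]

theorem stmt13 (α₁ α₂ H : ℝ) (h₁ : 0 < α₁) (h₂ : 0 < α₂) (hH : H ∈ Set.Ioo (0 : ℝ) 2) :
    (∫ x in Set.Ioi (0 : ℝ), ∫ y in Set.Ioi (0 : ℝ),
        Real.exp (-α₁ * x - α₂ * y) * |x - y| ^ H)
      = Real.Gamma (H + 1) / (α₁ + α₂) * (α₁ ^ (-(H + 1)) + α₂ ^ (-(H + 1)))
    ∧ (∫ u in Set.Iio (0 : ℝ), ∫ v in Set.Iio (0 : ℝ),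
        Real.exp (α₁ * u + α₂ * v) * |v - u| ^ H)
      = Real.Gamma (H + 1) / (α₁ + α₂) * (α₁ ^ (-(H + 1)) + α₂ ^ (-(H + 1))) := by
  refine ⟨integral_positive_quadrant h₁ h₂ hH.1, ?_⟩
  rw [← integral_positive_quadrant h₁ h₂ hH.1]
  simp_rw [integral_Iio_eq_integral_Ioi_neg]
  refine integral_congr_ae (.of_forall fun x => integral_congr_ae (.of_forall fun y => ?_))
  have e₁ : α₁ * -x + α₂ * -y = -α₁ * x - α₂ * y := by ring
  have e₂ : -y - -x = x - y := by ring
  simp only [e₁, e₂]
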